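/- arXiv:1708.02878 — 2 statements merged into one kernel-verified Lean document; each statement's English description precedes it below -/
import Mathlib

section
/- Let U ⊆ ℝ be open and f : U → ℝ a real-analytic function with f(x) ≥ 0 for all x ∈ U. Then the function x ↦ √(f(x)) is locally Lipschitz on U. Moreover, on the open subset {x ∈ U : f(x) > 0}, the function x ↦ √(f(x)) is real-analytic. -/
/-! The Lipschitz estimate rests on the quadratic Taylor bound
`f y ≤ f x + f' x (y - x) + M ‖y - x‖²`, valid locally. Nonnegativity of the right-hand side forces
Glaeser's inequality `‖f' x‖ ≤ 2 √(M f x)`, by which the right-hand side is at most the perfect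
square `(√(f x) + √M ‖y - x‖)²`. Thus `√f` is `√M`-Lipschitz near each point. Glaeser's inequality
needs the bound at all increments up to length `√(f x / M)`; since `f` is locally bounded, enlarging
`M` makes this length smaller than any prescribed radius. -/

open Filter Metric
open scoped Topology ContDiff NNReal

section Taylor

variable {𝕜 E F : Type*} [RCLike 𝕜] [NormedAddCommGroup E] [NormedSpace 𝕜 E]
  [NormedAddCommGroup F] [NormedSpace 𝕜 F]

theorem norm_sub_sub_apply_le_of_lipschitzOnWith_hasFDerivWithinAt [NormedSpace ℝ E]
    {f : E → F} {f' : E → E →L[𝕜] F} {s : Set E} {K : ℝ≥0} (hs : Convex ℝ s)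
    (hf : ∀ x ∈ s, HasFDerivWithinAt f (f' x) s x) (hf' : LipschitzOnWith K f' s)
    {x y : E} (hx : x ∈ s) (hy : y ∈ s) :
    ‖f y - f x - f' x (y - x)‖ ≤ K * ‖y - x‖ ^ 2 := by
  have hsub : segment ℝ x y ⊆ s := hs.segment_subset hx hy
  have hbound : ∀ z ∈ segment ℝ x y, ‖f' z - f' x‖ ≤ K * ‖y - x‖ := fun z hz =>
    (hf'.norm_sub_le (hsub hz) hx).trans <| by
      gcongr
      exact norm_sub_le_of_mem_segment hz
  calc ‖f y - f x - f' x (y - x)‖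
      ≤ K * ‖y - x‖ * ‖y - x‖ :=
        (convex_segment x y).norm_image_sub_le_of_norm_hasFDerivWithin_le'
          (fun z hz => (hf z (hsub hz)).mono hsub) hbound
          (left_mem_segment ℝ x y) (right_mem_segment ℝ x y)
    _ = K * ‖y - x‖ ^ 2 := by ring

theorem exists_norm_sub_sub_fderiv_le_sq_of_contDiffAt {f : E → F} {a : E}
    (hf : ContDiffAt 𝕜 2 f a) :
    ∃ K : ℝ≥0, ∃ t ∈ 𝓝 a, ∀ x ∈ t, ∀ y ∈ t,
      ‖f y - f x - fderiv 𝕜 f x (y - x)‖ ≤ K * ‖y - x‖ ^ 2 := by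
  let : NormedSpace ℝ E := NormedSpace.restrictScalars ℝ 𝕜 E
  obtain ⟨K, u, hu, hK⟩ :=
    (hf.fderiv_right (m := 1) (by norm_num)).exists_lipschitzOnWith
  have hdiff : ∀ᶠ x in 𝓝 a, DifferentiableAt 𝕜 f x :=
    (hf.eventually (by simp)).mono fun x hx => hx.differentiableAt two_ne_zero
  obtain ⟨ε, hε, hball⟩ := Metric.mem_nhds_iff.mp (inter_mem hu hdiff)
  refine ⟨K, ball a ε, ball_mem_nhds a hε, fun x hx y hy => ?_⟩
  exact norm_sub_sub_apply_le_of_lipschitzOnWith_hasFDerivWithinAt (convex_ball a ε)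
    (fun z hz => (hball hz).2.hasFDerivAt.hasFDerivWithinAt)
    (hK.mono fun z hz => (hball hz).1) hx hy

end Taylor

section Glaeser

theorem sq_le_four_mul_of_forall_quadratic_nonneg {b c M r : ℝ} (hM : 0 < M) (hr : 0 < r)
    (hb : 0 ≤ b) (hc : c ≤ M * r ^ 2)
    (h : ∀ t, 0 ≤ t → t ≤ r → 0 ≤ c - b * t + M * t ^ 2) : b ^ 2 ≤ 4 * M * c := by
  have hbr : b ≤ 2 * M * r := by
    have h_endpoint : b * r ≤ 2 * M * r * r := by linarith [h r hr.le le_rfl]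
    exact le_of_mul_le_mul_right h_endpoint hr
  have h_vertex : 0 ≤ c - b * (b / (2 * M)) + M * (b / (2 * M)) ^ 2 :=
    h _ (by positivity) (by rw [div_le_iff₀ (by positivity)]; linarith)
  have h_value : c - b * (b / (2 * M)) + M * (b / (2 * M)) ^ 2 = (4 * M * c - b ^ 2) / (4 * M) := by
    field_simp
    ring
  rw [h_value, le_div_iff₀ (by positivity), zero_mul] at h_vertex
  exact sub_nonneg.mp h_vertex

variable {E : Type*} [NormedAddCommGroup E] [NormedSpace ℝ E]

theorem norm_le_two_mul_sqrt_of_forall_quadratic_nonneg {ℓ : E →L[ℝ] ℝ} {c M r : ℝ}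
    (hM : 0 < M) (hr : 0 < r) (hc : c ≤ M * r ^ 2)
    (h : ∀ v, ‖v‖ ≤ r → 0 ≤ c + ℓ v + M * ‖v‖ ^ 2) : ‖ℓ‖ ≤ 2 * √(M * c) := by
  have apply_le : ∀ v, ‖v‖ = 1 → ℓ v ≤ 2 * √(M * c) := by
    intro v hv
    rcases le_total (ℓ v) 0 with hneg | hpos
    · exact hneg.trans (by positivity)
    have hsq : ℓ v ^ 2 ≤ 4 * M * c := by
      refine sq_le_four_mul_of_forall_quadratic_nonneg hM hr hpos hc fun t ht htr => ?_
      have hnorm : ‖(-t) • v‖ = t := by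
        rw [norm_smul, hv, mul_one, norm_neg, Real.norm_of_nonneg ht]
      have hquad := h ((-t) • v) (hnorm.trans_le htr)
      rw [hnorm, map_smul, smul_eq_mul] at hquad
      linarith
    calc ℓ v ≤ √(2 ^ 2 * (M * c)) := Real.le_sqrt_of_sq_le (by linarith)
      _ = 2 * √(M * c) := by rw [Real.sqrt_mul (by positivity), Real.sqrt_sq zero_le_two]
  refine ContinuousLinearMap.opNorm_le_of_unit_norm (by positivity) fun v hv => abs_le'.mpr ?_
  exact ⟨apply_le v hv, by simpa only [map_neg] using apply_le (-v) (by rwa [norm_neg])⟩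

theorem lipschitzOnWith_sqrt_of_le_add_sq {f : E → ℝ} {f' : E → E →L[ℝ] ℝ} {s t : Set E}
    {M r : ℝ} (hM : 0 < M) (hr : 0 < r) (hst : ∀ x ∈ s, closedBall x r ⊆ t)
    (hf_nonneg : ∀ x ∈ t, 0 ≤ f x) (hf_le : ∀ x ∈ s, f x ≤ M * r ^ 2)
    (hf : ∀ x ∈ s, ∀ y ∈ t, f y ≤ f x + f' x (y - x) + M * ‖y - x‖ ^ 2) :
    LipschitzOnWith (√M).toNNReal (fun x => √(f x)) s := by
  refine LipschitzOnWith.of_le_add_mul' _ fun y hy x hx => ?_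
  have hmem : ∀ z ∈ s, z ∈ t := fun z hz => hst z hz (mem_closedBall_self hr.le)
  have glaeser : ‖f' x‖ ≤ 2 * √(M * f x) := by
    refine norm_le_two_mul_sqrt_of_forall_quadratic_nonneg hM hr (hf_le x hx) fun v hv => ?_
    have hv_mem : x + v ∈ t := hst x hx (by simpa [mem_closedBall_iff_norm] using hv)
    simpa only [add_sub_cancel_left] using
      (hf_nonneg _ hv_mem).trans (hf x hx _ hv_mem)
  rw [dist_eq_norm]
  refine Real.sqrt_le_iff.mpr ⟨by positivity, ?_⟩
  calc f y ≤ f x + f' x (y - x) + M * ‖y - x‖ ^ 2 := hf x hx y (hmem y hy)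
    _ ≤ f x + 2 * √(M * f x) * ‖y - x‖ + M * ‖y - x‖ ^ 2 := by
        gcongr
        exact (le_abs_self _).trans ((f' x).le_of_opNorm_le glaeser _)
    _ = √(f x) ^ 2 + 2 * (√M * √(f x)) * ‖y - x‖ + √M ^ 2 * ‖y - x‖ ^ 2 := by
        rw [Real.sqrt_mul hM.le, Real.sq_sqrt hM.le, Real.sq_sqrt (hf_nonneg x (hmem x hx))]
    _ = (√(f x) + √M * ‖y - x‖) ^ 2 := by ring

theorem exists_lipschitzOnWith_sqrt_of_contDiffAt {f : E → ℝ} {a : E} (hf : ContDiffAt ℝ 2 f a)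
    (hf_nonneg : ∀ᶠ x in 𝓝 a, 0 ≤ f x) :
    ∃ K, ∃ t ∈ 𝓝 a, LipschitzOnWith K (fun x => √(f x)) t := by
  obtain ⟨K, u, hu, hK⟩ := exists_norm_sub_sub_fderiv_le_sq_of_contDiffAt hf
  have hf_lt : ∀ᶠ x in 𝓝 a, f x < f a + 1 := hf.continuousAt.eventually_lt_const (lt_add_one _)
  obtain ⟨ε, hε, hball⟩ :=
    Metric.mem_nhds_iff.mp (inter_mem hu (hf_nonneg.and hf_lt))
  set r := ε / 2
  have hr : 0 < r := half_pos hε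
  set M := max (K : ℝ) ((f a + 1) / r ^ 2)
  have hM : 0 < M := lt_max_of_lt_right <| by
    have : 0 ≤ f a := hf_nonneg.self_of_nhds
    positivity
  have hsub : ball a r ⊆ ball a ε := ball_subset_ball (half_le_self hε.le)
  refine ⟨_, ball a r, ball_mem_nhds a hr, lipschitzOnWith_sqrt_of_le_add_sq
    (f' := fderiv ℝ f) (t := ball a ε) hM hr ?_ (fun x hx => (hball hx).2.1) ?_ ?_⟩
  · intro x hx y hy
    calc dist y a ≤ dist y x + dist x a := dist_triangle y x a
      _ < r + r := add_lt_add_of_le_of_lt hy hx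
      _ = ε := add_halves ε
  · intro x hx
    calc f x ≤ f a + 1 := (hball (hsub hx)).2.2.le
      _ ≤ M * r ^ 2 := (div_le_iff₀ (by positivity)).mp (le_max_right _ _)
  · intro x hx y hy
    have htaylor : f y - f x - fderiv ℝ f x (y - x) ≤ M * ‖y - x‖ ^ 2 :=
      calc f y - f x - fderiv ℝ f x (y - x)
          ≤ K * ‖y - x‖ ^ 2 := (le_abs_self _).trans (hK x (hball (hsub hx)).1 y (hball hy).1)
        _ ≤ M * ‖y - x‖ ^ 2 := by gcongr; exact le_max_left _ _
    linarith

theorem stmt5_general {U : Set E} (hU : IsOpen U) {f : E → ℝ} {n : WithTop ℕ∞} (hn : 2 ≤ n)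
    (hf : ∀ x ∈ U, ContDiffAt ℝ n f x) (hpos : ∀ x ∈ U, 0 ≤ f x) :
    LocallyLipschitzOn U (fun x => √(f x)) ∧
      ∀ x ∈ U, 0 < f x → ContDiffAt ℝ n (fun x => √(f x)) x := by
  refine ⟨fun a ha => ?_, fun a ha hfa => (hf a ha).sqrt hfa.ne'⟩
  obtain ⟨K, t, ht, hK⟩ := exists_lipschitzOnWith_sqrt_of_contDiffAt ((hf a ha).of_le hn)
    (eventually_of_mem (hU.mem_nhds ha) hpos)
  exact ⟨K, t, mem_nhdsWithin_of_mem_nhds ht, hK⟩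

end Glaeser

/-- The square root of a nonnegative real-analytic function on an open set `U ⊆ ℝ` is
locally Lipschitz on `U`, and real-analytic on the open subset where the function is
positive. -/
theorem stmt5 (U : Set ℝ) (hU : IsOpen U) (f : ℝ → ℝ)
    (hf : AnalyticOnNhd ℝ f U) (hpos : ∀ x ∈ U, 0 ≤ f x) :
    LocallyLipschitzOn U (fun x => Real.sqrt (f x)) ∧
      AnalyticOnNhd ℝ (fun x => Real.sqrt (f x)) {x ∈ U | 0 < f x} := by
  obtain ⟨hlip, hsqrt⟩ :=
    stmt5_general hU (n := ω) le_top (fun x hx => (hf x hx).contDiffAt) hpos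
  exact ⟨hlip, fun x hx => (hsqrt x hx.1 hx.2).analyticAt⟩
end

section
/- Fix a natural number n ≥ 2, real numbers ℓ > 0 and a with 4ℓ²a + n² > 0, and natural numbers k, K. Set s := √(4ℓ²a + n²), ω := (n + s + 2k + 4K)/(2ℓ), and for x ∈ ℝ and j ∈ ℕ let (x)_j := ∏_{i=0}^{j−1}(x+i) denote the rising factorial. Define ψ : (0,∞) → ℝ by ψ(r) := (ℓ² + r²)^{−ℓω/2} · r^k · ∑_{j=0}^{K} [((−K)_j · (−K − s/2)_j) / ((n/2 + k)_j · j!)] · (−r²/ℓ²)^j. Then ψ is twice differentiable on (0,∞) and for every r > 0 it satisfies the radial eigenvalue equation (r²/ℓ² + 1)·[ r^{1−n} · d/dr( (r²/ℓ² + 1) · r^{n−1} · ψ'(r) ) − k(k + n − 2) · r^{−2} · ψ(r) ] = −ω² ψ(r) + a · (r²/ℓ² + 1) · ψ(r). -/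
/-!
Writing `ψ(r) = W(r) v(r)` with the weight `W(r) = (ℓ² + r²)^(-ℓω/2) r^k` removes the singular
coefficients of the radial equation: the `r⁻²` pole and the `ω²` term cancel, and a common factor
`V = r²/ℓ² + 1` splits off. In the variable `z = -r²/ℓ²` what is left is the hypergeometric
equation with `γ = n/2 + k`, `α + β = n/2 + k - ℓω` and `(α - β)² = ℓ²a + n²/4`. The quantized
frequency is the one for which `α = -K`, so that the hypergeometric series terminates.
-/

open Polynomial Topology

section HypergeometricEquation

/-- The hypergeometric differential operator
`P ↦ X(1 - X) P'' + (c - (a + b + 1) X) P' - ab P` on polynomials. -/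
noncomputable def hypergeometricOperator {R : Type*} [CommRing R] (a b c : R) (P : R[X]) : R[X] :=
  X * (1 - X) * derivative (derivative P) + (C c - C (a + b + 1) * X) * derivative P - C (a * b) * P

lemma hypergeometricOperator_add {R : Type*} [CommRing R] (a b c : R) (P Q : R[X]) :
    hypergeometricOperator a b c (P + Q) =
      hypergeometricOperator a b c P + hypergeometricOperator a b c Q := by
  simp only [hypergeometricOperator, derivative_add]
  ring

lemma hypergeometricOperator_C_mul_X_pow_succ {R : Type*} [CommRing R] (a b c q : R) (j : ℕ) :
    hypergeometricOperator a b c (C q * X ^ (j + 1)) =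
      C (q * ((c + j) * (j + 1))) * X ^ j -
        C ((a + (j + 1 : ℕ)) * (b + (j + 1 : ℕ)) * q) * X ^ (j + 1) := by
  have hX : (X : R[X]) * ((j : R[X]) * X ^ (j - 1)) = (j : R[X]) * X ^ j := by
    cases j with
    | zero => simp
    | succ j => rw [Nat.add_sub_cancel]; ring
  simp only [hypergeometricOperator, derivative_C_mul, derivative_X_pow, Nat.add_sub_cancel,
    derivative_natCast_mul, map_add, map_mul, map_natCast, map_one]
  push_cast
  linear_combination C q * (1 - X) * (j + 1) * hX

variable {𝕜 : Type*} [Field 𝕜]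

lemma ordinaryHypergeometricCoefficient_succ_mul [CharZero 𝕜] (a b : 𝕜) {c : 𝕜} {j : ℕ}
    (hc : c + j ≠ 0) :
    ordinaryHypergeometricCoefficient a b c (j + 1) * ((c + j) * (j + 1)) =
      (a + j) * (b + j) * ordinaryHypergeometricCoefficient a b c j := by
  have hj : (j + 1 : 𝕜) ≠ 0 := by exact_mod_cast j.succ_ne_zero
  simp only [ordinaryHypergeometricCoefficient, ascPochhammer_succ_eval, Nat.factorial_succ,
    Nat.cast_mul, Nat.cast_add, Nat.cast_one, mul_inv]
  field_simp

/-- The sum of the terms of degree at most `m` of the hypergeometric series `₂F₁(a, b; c; X)`.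
For `a = -m` it is the terminating series itself; being a polynomial, it makes sense outside the
disc of convergence, where `ordinaryHypergeometric` would be a junk value. -/
noncomputable def hypergeometricPartialSum (a b c : 𝕜) (m : ℕ) : 𝕜[X] :=
  ∑ j ∈ Finset.range (m + 1), C (ordinaryHypergeometricCoefficient a b c j) * X ^ j

lemma eval_ascPochhammer_eq_prod_range {R : Type*} [CommSemiring R] (x : R) (j : ℕ) :
    (ascPochhammer R j).eval x = ∏ i ∈ Finset.range j, (x + i) := by
  induction j with
  | zero => simp
  | succ j ih => rw [ascPochhammer_succ_eval, ih, Finset.prod_range_succ]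

lemma eval_hypergeometricPartialSum (a b c : 𝕜) (m : ℕ) (z : 𝕜) :
    (hypergeometricPartialSum a b c m).eval z =
      ∑ j ∈ Finset.range (m + 1),
        ((∏ i ∈ Finset.range j, (a + i)) * ∏ i ∈ Finset.range j, (b + i)) /
          ((∏ i ∈ Finset.range j, (c + i)) * (j.factorial : 𝕜)) * z ^ j := by
  rw [hypergeometricPartialSum, eval_finsetSum]
  refine Finset.sum_congr rfl fun j _ => ?_
  simp only [ordinaryHypergeometricCoefficient, eval_ascPochhammer_eq_prod_range, eval_mul, eval_C,
    eval_pow, eval_X]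
  ring

-- The terms telescope, because the operator maps `X ^ (j + 1)` to a combination of `X ^ j` and
-- `X ^ (j + 1)`.
lemma hypergeometricOperator_hypergeometricPartialSum [CharZero 𝕜] (a b : 𝕜) {c : 𝕜} {m : ℕ}
    (hc : ∀ j < m, c + j ≠ 0) :
    hypergeometricOperator a b c (hypergeometricPartialSum a b c m) =
      -(C ((a + m) * (b + m) * ordinaryHypergeometricCoefficient a b c m) * X ^ m) := by
  induction m with
  | zero => simp [hypergeometricOperator, hypergeometricPartialSum]
  | succ m ih =>
    rw [hypergeometricPartialSum, Finset.sum_range_succ, ← hypergeometricPartialSum,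
      hypergeometricOperator_add, ih fun j hj => hc j (hj.trans m.lt_succ_self),
      hypergeometricOperator_C_mul_X_pow_succ,
      ordinaryHypergeometricCoefficient_succ_mul a b (hc m m.lt_succ_self)]
    ring

lemma hypergeometricOperator_hypergeometricPartialSum_neg_natCast [CharZero 𝕜] (b : 𝕜) {c : 𝕜}
    {m : ℕ} (hc : ∀ j < m, c + j ≠ 0) :
    hypergeometricOperator (-(m : 𝕜)) b c (hypergeometricPartialSum (-(m : 𝕜)) b c m) = 0 := by
  simp [hypergeometricOperator_hypergeometricPartialSum (-(m : 𝕜)) b hc]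

end HypergeometricEquation

section SecondDerivative

variable {𝕜 : Type*} [NontriviallyNormedField 𝕜] {f f' g g' W φ : 𝕜 → 𝕜} {f'' g'' φ' x : 𝕜}

/-- `f` has derivative `f'` in a neighbourhood of `x`, and `f'` has derivative `f''` at `x`: a
second-order analogue of `HasDerivAt`. -/
structure HasSecondDerivAt (f f' : 𝕜 → 𝕜) (f'' x : 𝕜) : Prop where
  eventually_hasDerivAt : ∀ᶠ t in 𝓝 x, HasDerivAt f (f' t) t
  hasDerivAt_deriv : HasDerivAt f' f'' x

namespace HasSecondDerivAt

lemma hasDerivAt (h : HasSecondDerivAt f f' f'' x) : HasDerivAt f (f' x) x :=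
  h.eventually_hasDerivAt.self_of_nhds

lemma deriv_eventuallyEq (h : HasSecondDerivAt f f' f'' x) : deriv f =ᶠ[𝓝 x] f' :=
  h.eventually_hasDerivAt.mono fun _ ht => ht.deriv

lemma differentiableAt_deriv (h : HasSecondDerivAt f f' f'' x) : DifferentiableAt 𝕜 (deriv f) x :=
  (h.hasDerivAt_deriv.congr_of_eventuallyEq h.deriv_eventuallyEq).differentiableAt

lemma comp (hg : HasSecondDerivAt g g' g'' (f x)) (hf : HasSecondDerivAt f f' f'' x) :
    HasSecondDerivAt (fun t => g (f t)) (fun t => g' (f t) * f' t)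
      (g'' * f' x ^ 2 + g' (f x) * f'') x where
  eventually_hasDerivAt := by
    filter_upwards [hf.hasDerivAt.continuousAt.eventually hg.eventually_hasDerivAt,
      hf.eventually_hasDerivAt] with t hgt hft using hgt.comp t hft
  hasDerivAt_deriv :=
    ((hg.hasDerivAt_deriv.comp x hf.hasDerivAt).mul hf.hasDerivAt_deriv).congr_deriv
      (by simp only [Function.comp_apply]; ring)

lemma mul_of_logDeriv (hf : HasSecondDerivAt f f' f'' x)
    (hW : ∀ᶠ t in 𝓝 x, HasDerivAt W (φ t * W t) t) (hφ : HasDerivAt φ φ' x) :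
    HasSecondDerivAt (fun t => W t * f t) (fun t => W t * (φ t * f t + f' t))
      (W x * ((φ x ^ 2 + φ') * f x + 2 * φ x * f' x + f'')) x where
  eventually_hasDerivAt := by
    filter_upwards [hW, hf.eventually_hasDerivAt] with t hWt hft
    exact (hWt.mul hft).congr_deriv (by ring)
  hasDerivAt_deriv :=
    (hW.self_of_nhds.mul ((hφ.mul hf.hasDerivAt).add hf.hasDerivAt_deriv)).congr_deriv
      (by simp only [Pi.add_apply, Pi.mul_apply]; ring)

end HasSecondDerivAt

lemma hasSecondDerivAt_eval (P : 𝕜[X]) (x : 𝕜) :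
    HasSecondDerivAt (fun t => P.eval t) (fun t => (derivative P).eval t)
      ((derivative (derivative P)).eval x) x :=
  ⟨.of_forall P.hasDerivAt, (derivative P).hasDerivAt x⟩

lemma hasSecondDerivAt_neg_sq_div (d x : 𝕜) :
    HasSecondDerivAt (fun t => -(t ^ 2) / d) (fun t => -(2 * t) / d) (-2 / d) x where
  eventually_hasDerivAt := .of_forall fun t => by
    simpa using (hasDerivAt_pow 2 t).neg.div_const d
  hasDerivAt_deriv := by
    simpa using ((hasDerivAt_id x).const_mul 2).neg.div_const d

lemma HasSecondDerivAt.comp_neg_sq_div {d : 𝕜} (hg : HasSecondDerivAt g g' g'' (-(x ^ 2) / d)) :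
    HasSecondDerivAt (fun t => g (-(t ^ 2) / d)) (fun t => g' (-(t ^ 2) / d) * (-(2 * t) / d))
      (g'' * (-(2 * x) / d) ^ 2 + g' (-(x ^ 2) / d) * (-2 / d)) x :=
  hg.comp (f := fun t => -(t ^ 2) / d) (hasSecondDerivAt_neg_sq_div d x)

end SecondDerivative

section RadialEquation

/-- The radial operator of the scalar field equation with squared mass `a`, for the angular
eigenvalue `-k(k + n - 2)` and the frequency `ω`, on anti-de Sitter space of radius `ℓ`. Modes are
the functions it annihilates. -/
noncomputable def radialOperator (n k ℓ a ω : ℝ) (ψ : ℝ → ℝ) (r : ℝ) : ℝ :=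
  (r ^ 2 / ℓ ^ 2 + 1) *
      (r ^ (1 - n) * deriv (fun t => (t ^ 2 / ℓ ^ 2 + 1) * t ^ (n - 1) * deriv ψ t) r -
        k * (k + n - 2) * (ψ r / r ^ 2)) +
    ω ^ 2 * ψ r - a * (r ^ 2 / ℓ ^ 2 + 1) * ψ r

/-- The factor `(ℓ² + r²)^(-ℓω/2) r^k` split off from a radial mode: `r^k` is its behaviour at the
origin, and the first factor removes the frequency term. -/
noncomputable def radialWeight (k ℓ ω r : ℝ) : ℝ :=
  (ℓ ^ 2 + r ^ 2) ^ (-(ℓ * ω) / 2) * r ^ k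

variable {n k ℓ a ω r : ℝ}

lemma rpow_mul_deriv_flux {ψ ψ' : ℝ → ℝ} {ψ'' : ℝ} (hr : 0 < r)
    (h : HasSecondDerivAt ψ ψ' ψ'' r) :
    r ^ (1 - n) * deriv (fun t => (t ^ 2 / ℓ ^ 2 + 1) * t ^ (n - 1) * deriv ψ t) r =
      (r ^ 2 / ℓ ^ 2 + 1) * ψ'' + (2 * r / ℓ ^ 2 + (r ^ 2 / ℓ ^ 2 + 1) * (n - 1) / r) * ψ' r := by
  have hV : HasDerivAt (fun t : ℝ => t ^ 2 / ℓ ^ 2 + 1) (2 * r / ℓ ^ 2) r := by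
    simpa using ((hasDerivAt_pow 2 r).div_const (ℓ ^ 2)).add_const 1
  have hpow : HasDerivAt (fun t : ℝ => t ^ (n - 1)) ((n - 1) * (r ^ (n - 1) / r)) r :=
    (Real.hasDerivAt_rpow_const (Or.inl hr.ne')).congr_deriv (by rw [Real.rpow_sub_one hr.ne'])
  have hflux : HasDerivAt (fun t => (t ^ 2 / ℓ ^ 2 + 1) * t ^ (n - 1) * deriv ψ t) _ r :=
    ((hV.mul hpow).mul h.hasDerivAt_deriv).congr_of_eventuallyEq <|
      h.deriv_eventuallyEq.mono fun t ht => by simp only [Pi.mul_apply, ht]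
  have hinv : r ^ (1 - n) * r ^ (n - 1) = 1 := by
    rw [← Real.rpow_add hr, sub_add_sub_cancel, sub_self, Real.rpow_zero]
  rw [hflux.deriv]
  simp only [Pi.mul_apply]
  linear_combination ((r ^ 2 / ℓ ^ 2 + 1) * ψ'' +
    (2 * r / ℓ ^ 2 + (r ^ 2 / ℓ ^ 2 + 1) * (n - 1) / r) * ψ' r) * hinv

lemma hasDerivAt_radialWeight (hr : r ≠ 0) :
    HasDerivAt (radialWeight k ℓ ω)
      ((k / r - ℓ * ω * r / (ℓ ^ 2 + r ^ 2)) * radialWeight k ℓ ω r) r := by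
  have hne : ℓ ^ 2 + r ^ 2 ≠ 0 := by positivity
  have hbase := ((hasDerivAt_pow 2 r).const_add (ℓ ^ 2)).rpow_const (p := -(ℓ * ω) / 2)
    (Or.inl hne)
  refine (hbase.mul (Real.hasDerivAt_rpow_const (p := k) (Or.inl hr))).congr_deriv ?_
  rw [Real.rpow_sub_one hne, Real.rpow_sub_one hr, radialWeight]
  push_cast
  ring

lemma hasDerivAt_logDeriv_radialWeight (hr : r ≠ 0) :
    HasDerivAt (fun t => k / t - ℓ * ω * t / (ℓ ^ 2 + t ^ 2))
      (-k / r ^ 2 - ℓ * ω * (ℓ ^ 2 - r ^ 2) / (ℓ ^ 2 + r ^ 2) ^ 2) r := by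
  have hne : ℓ ^ 2 + r ^ 2 ≠ 0 := by positivity
  have hpole := (hasDerivAt_const r k).div (hasDerivAt_id r) hr
  have hfrac := ((hasDerivAt_id r).const_mul (ℓ * ω)).div
    ((hasDerivAt_pow 2 r).const_add (ℓ ^ 2)) hne
  refine (hpole.sub hfrac).congr_deriv ?_
  simp only [id]
  push_cast
  ring

lemma HasSecondDerivAt.radialWeight_mul {v v' : ℝ → ℝ} {v'' : ℝ} (hr : r ≠ 0)
    (hv : HasSecondDerivAt v v' v'' r) :
    HasSecondDerivAt (fun t => radialWeight k ℓ ω t * v t)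
      (fun t => radialWeight k ℓ ω t * ((k / t - ℓ * ω * t / (ℓ ^ 2 + t ^ 2)) * v t + v' t))
      (radialWeight k ℓ ω r *
        (((k / r - ℓ * ω * r / (ℓ ^ 2 + r ^ 2)) ^ 2 +
          (-k / r ^ 2 - ℓ * ω * (ℓ ^ 2 - r ^ 2) / (ℓ ^ 2 + r ^ 2) ^ 2)) * v r +
          2 * (k / r - ℓ * ω * r / (ℓ ^ 2 + r ^ 2)) * v' r + v'')) r :=
  hv.mul_of_logDeriv ((eventually_ne_nhds hr).mono fun _ ht => hasDerivAt_radialWeight ht)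
    (hasDerivAt_logDeriv_radialWeight hr)

lemma radialOperator_radialWeight_mul {v v' : ℝ → ℝ} {v'' : ℝ} (hℓ : ℓ ≠ 0) (hr : 0 < r)
    (hv : HasSecondDerivAt v v' v'' r) :
    radialOperator n k ℓ a ω (fun t => radialWeight k ℓ ω t * v t) r =
      radialWeight k ℓ ω r * (r ^ 2 / ℓ ^ 2 + 1) *
        ((r ^ 2 / ℓ ^ 2 + 1) * v'' +
          ((2 * k + n - 1) * (r ^ 2 / ℓ ^ 2 + 1) / r + 2 * (1 - ℓ * ω) * r / ℓ ^ 2) * v' r +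
          ((k - ℓ * ω) * (k - ℓ * ω + n) - ℓ ^ 2 * a) / ℓ ^ 2 * v r) := by
  have hne : ℓ ^ 2 + r ^ 2 ≠ 0 := by positivity
  rw [radialOperator, rpow_mul_deriv_flux hr (hv.radialWeight_mul hr.ne')]
  field_simp
  ring

lemma radialOperator_radialWeight_mul_comp_neg_sq {u u' : ℝ → ℝ} {u'' α β : ℝ} (hℓ : ℓ ≠ 0)
    (hr : 0 < r) (hsum : α + β = n / 2 + k - ℓ * ω) (hdiff : (α - β) ^ 2 = ℓ ^ 2 * a + n ^ 2 / 4)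
    (hu : HasSecondDerivAt u u' u'' (-(r ^ 2) / ℓ ^ 2)) :
    radialOperator n k ℓ a ω (fun t => radialWeight k ℓ ω t * u (-(t ^ 2) / ℓ ^ 2)) r =
      -4 / ℓ ^ 2 * radialWeight k ℓ ω r * (r ^ 2 / ℓ ^ 2 + 1) *
        (-(r ^ 2) / ℓ ^ 2 * (1 - -(r ^ 2) / ℓ ^ 2) * u'' +
          (n / 2 + k - (α + β + 1) * (-(r ^ 2) / ℓ ^ 2)) * u' (-(r ^ 2) / ℓ ^ 2) -
          α * β * u (-(r ^ 2) / ℓ ^ 2)) := by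
  have hprod : (k - ℓ * ω) * (k - ℓ * ω + n) - ℓ ^ 2 * a = 4 * (α * β) := by
    linear_combination hdiff - (α + β + n / 2 + k - ℓ * ω) * hsum
  rw [radialOperator_radialWeight_mul hℓ hr hu.comp_neg_sq_div, hprod,
    hsum]
  field_simp
  ring

end RadialEquation

theorem stmt9_general {n k ℓ a s ω : ℝ} {K : ℕ} (hℓ : ℓ ≠ 0)
    (hγ : ∀ j < K, n / 2 + k + j ≠ 0)
    (hs : s ^ 2 = 4 * ℓ ^ 2 * a + n ^ 2)
    (hω : ω = (n + s + 2 * k + 4 * K) / (2 * ℓ))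
    {rf : ℝ → ℕ → ℝ}
    (hrf : ∀ (x : ℝ) (j : ℕ), rf x j = ∏ i ∈ Finset.range j, (x + i))
    {ψ : ℝ → ℝ}
    (hψ : ∀ r : ℝ, ψ r =
      (ℓ ^ 2 + r ^ 2) ^ (-(ℓ * ω) / 2) * r ^ k *
        ∑ j ∈ Finset.range (K + 1),
          (rf (-(K : ℝ)) j * rf (-(K : ℝ) - s / 2) j) /
              (rf (n / 2 + k) j * (Nat.factorial j : ℝ)) *
            (-(r ^ 2) / ℓ ^ 2) ^ j) :
    ∀ r : ℝ, 0 < r →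
      DifferentiableAt ℝ ψ r ∧
      DifferentiableAt ℝ (deriv ψ) r ∧
      (r ^ 2 / ℓ ^ 2 + 1) *
          (r ^ (1 - n) * deriv (fun t : ℝ => (t ^ 2 / ℓ ^ 2 + 1) * t ^ (n - 1) * deriv ψ t) r -
            k * (k + n - 2) * (ψ r / r ^ 2)) =
        -(ω ^ 2) * ψ r + a * (r ^ 2 / ℓ ^ 2 + 1) * ψ r := by
  intro r hr
  set P := hypergeometricPartialSum (-(K : ℝ)) (-(K : ℝ) - s / 2) (n / 2 + k) K
  have hP := congrArg (eval (-(r ^ 2) / ℓ ^ 2))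
    (hypergeometricOperator_hypergeometricPartialSum_neg_natCast (-(K : ℝ) - s / 2) hγ)
  simp only [hypergeometricOperator, eval_sub, eval_add, eval_mul, eval_X, eval_C, eval_one,
    eval_zero] at hP
  obtain rfl : ψ = fun t => radialWeight k ℓ ω t * P.eval (-(t ^ 2) / ℓ ^ 2) := by
    funext t
    simp only [hψ, hrf, radialWeight, P, eval_hypergeometricPartialSum]
  have hu := hasSecondDerivAt_eval P (-(r ^ 2) / ℓ ^ 2)
  have hmode := hu.comp_neg_sq_div.radialWeight_mul (k := k) (ℓ := ℓ) (ω := ω) hr.ne'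
  have hsum : -(K : ℝ) + (-(K : ℝ) - s / 2) = n / 2 + k - ℓ * ω := by
    rw [hω]; field_simp; ring
  have hdiff : (-(K : ℝ) - (-(K : ℝ) - s / 2)) ^ 2 = ℓ ^ 2 * a + n ^ 2 / 4 := by
    linear_combination hs / 4
  have hzero := radialOperator_radialWeight_mul_comp_neg_sq hℓ hr hsum hdiff hu
  rw [hP, mul_zero, radialOperator] at hzero
  exact ⟨hmode.hasDerivAt.differentiableAt, hmode.differentiableAt_deriv, by
    linear_combination hzero⟩

/-- The explicit terminating-hypergeometric radial profile
`ψ(r) = (ℓ²+r²)^{-ℓω/2} r^k ∑_{j=0}^{K} ((-K)_j (-K-s/2)_j)/((n/2+k)_j j!) (-r²/ℓ²)^j`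
with `s = √(4ℓ²a+n²)` and `ω = (n+s+2k+4K)/(2ℓ)` is twice differentiable on `(0,∞)` and
solves the radial eigenvalue equation on the anti-de Sitter background. -/
theorem stmt9 (n : ℕ) (hn : 2 ≤ n) (ℓ a s ω : ℝ) (hℓ : 0 < ℓ)
    (hpos : 0 < 4 * ℓ ^ 2 * a + (n : ℝ) ^ 2)
    (k K : ℕ)
    (hs : s = Real.sqrt (4 * ℓ ^ 2 * a + (n : ℝ) ^ 2))
    (hω : ω = ((n : ℝ) + s + 2 * k + 4 * K) / (2 * ℓ))
    (rf : ℝ → ℕ → ℝ)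
    (hrf : ∀ (x : ℝ) (j : ℕ), rf x j = ∏ i ∈ Finset.range j, (x + i))
    (ψ : ℝ → ℝ)
    (hψ : ∀ r : ℝ, ψ r =
      (ℓ ^ 2 + r ^ 2) ^ (-(ℓ * ω) / 2) * r ^ k *
        ∑ j ∈ Finset.range (K + 1),
          (rf (-(K : ℝ)) j * rf (-(K : ℝ) - s / 2) j) /
              (rf ((n : ℝ) / 2 + (k : ℝ)) j * (Nat.factorial j : ℝ)) *
            (-(r ^ 2) / ℓ ^ 2) ^ j) :
    ∀ r : ℝ, 0 < r →
      DifferentiableAt ℝ ψ r ∧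
      DifferentiableAt ℝ (deriv ψ) r ∧
      (r ^ 2 / ℓ ^ 2 + 1) *
          (r ^ ((1 : ℝ) - (n : ℝ)) *
              deriv (fun t : ℝ => (t ^ 2 / ℓ ^ 2 + 1) * t ^ ((n : ℝ) - 1) * deriv ψ t) r -
            (k : ℝ) * ((k : ℝ) + (n : ℝ) - 2) * (ψ r / r ^ 2)) =
        -(ω ^ 2) * ψ r + a * (r ^ 2 / ℓ ^ 2 + 1) * ψ r :=
  stmt9_general hℓ.ne' (fun j _ => by positivity) (by rw [hs, Real.sq_sqrt hpos.le]) hω hrf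
    (by simpa only [Real.rpow_natCast] using hψ)
end
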